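/- Let γ > 0, 1 < α < 2, p > 1, a > 0, b > 0. Assume that one of the following four conditions holds: (a) α + γ > 2 and p(1−γ) ≤ 1; (b) α + γ ≤ 2, together with the requirement w'(0) = 0 below, and p(1−γ) ≤ 1; (c) α + γ = 2, together with the requirement w'(0) > 0 below, and p(1−γ) ≤ 1; (d) α + γ < 2, together with the requirement w'(0) > 0 below, and p < 1 + γ/(α−1). Then there exist no locally integrable f on [0,∞) and no w ∈ C¹([0,∞)) with w ≢ 0 such that the function t ↦ ₀I_t^{2−α}(w(s) − w'(0)s − w(0)) is in AC²([0,T]) for every T > 0 and for almost every t ≥ 0 one has (₀D_t^α w)(t) + a·w(t) = (₀I_t^γ f)(t) and f(t) ≥ b·|w(t)|^p. In other words, any such w defined on a maximal interval [0,T) must have T < +∞. -/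

import Mathlib

/-!
The proof is the test function method. Multiply the equation by `(1 - t / T) ^ (l - γ)` with `l`
large and integrate over `[0, T]`. Fubini's theorem and the Beta integral (`rlInt_dual`) move the
Riemann–Liouville integrals onto the weight, where they only shift its exponent. The Caputo term is
treated the same way: `g = ₀I^{2-α}(w - w'(0) s - w(0))` satisfies `g(0) = g'(0) = 0`
(`deriv_capKernel_zero`), so `g` is the twofold primitive of `₀D^α w`. The result
(`tested_inequality`) is, for `T ≥ 1` and positive constants independent of `T`,

  `b ∫ |w|^p (1 - t/T)^l + B w'(0) T^{2-γ-α} ≤ D |w(0)| T^{1-γ-α} + K T^{-γ} ∫ |w| (1 - t/T)^{l/p}`.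

With `q` the exponent conjugate to `p`, Young's inequality absorbs the last integral into the
left-hand side at the cost of `C T^{1-γq}` (`young_weighted`).

In case (d), `w'(0) T^{2-γ-α}` outgrows all other terms, because the bound on `p` says exactly that
`1 - γq < 2 - γ - α` (`false_of_growing_boundary`).

In the other cases `p (1 - γ) ≤ 1`, that is `γq ≥ 1`, and the `w'(0)` term tends to `0`, vanishes or
has the favourable sign. The absorbed inequality then bounds `∫ |w|^p`; once `w ∈ L^p`,
`T^{-γ} ∫₀ᵀ |w| → 0` even when `γq = 1` (`mean_decay`), so the inequality above yields
`∫ |w|^p = 0` (`eq_zero_of_vanishing_boundary`).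
-/

open MeasureTheory Filter

/-- Riemann–Liouville fractional integral of order `σ` based at `0`:
`(₀I_t^σ f)(t) = (1/Γ(σ)) ∫₀ᵗ (t−s)^{σ−1} f(s) ds`. -/
noncomputable def rlInt (σ : ℝ) (f : ℝ → ℝ) (t : ℝ) : ℝ :=
  (1 / Real.Gamma σ) * ∫ s in (0:ℝ)..t, (t - s) ^ (σ - 1) * f s

/-- The function whose second derivative is the (left) Caputo derivative of order `α ∈ (1,2]`:
for `α < 2` it is `₀I_t^{2−α}(w(s) − w'(0)·s − w(0))`, and for `α = 2` it is `w` itself. -/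
noncomputable def capKernel (α : ℝ) (w : ℝ → ℝ) : ℝ → ℝ :=
  if α = 2 then w else rlInt (2 - α) (fun s => w s - deriv w 0 * s - w 0)

/-- Left Caputo fractional derivative of order `α ∈ (1,2]`:
`(₀D_t^α w)(t) = (d²/dt²)[ ₀I_t^{2−α}(w(s) − w'(0)s − w(0)) ](t)` (second derivative of `w` when `α = 2`). -/
noncomputable def caputoD (α : ℝ) (w : ℝ → ℝ) : ℝ → ℝ :=
  deriv (deriv (capKernel α w))

/-- `g ∈ AC²([0,T])`: `g` is differentiable on `[0,T]`, its second derivative is integrable,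
and `g'` is the integral of `g''` (i.e. `g'` is absolutely continuous). -/
def AC2On (g : ℝ → ℝ) (T : ℝ) : Prop :=
  (∀ t ∈ Set.Icc (0:ℝ) T, DifferentiableAt ℝ g t) ∧
  IntervalIntegrable (deriv (deriv g)) volume 0 T ∧
  ∀ t ∈ Set.Icc (0:ℝ) T, deriv g t = deriv g 0 + ∫ s in (0:ℝ)..t, deriv (deriv g) s

/-! ### Duality for the Riemann–Liouville integral -/

lemma betaKernel_intervalIntegrable {σ m : ℝ} (hσ : 0 < σ) (hm : 0 ≤ m) (s T : ℝ) :
    IntervalIntegrable (fun t => (t - s) ^ (σ - 1) * (T - t) ^ m) volume s T := by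
  have h1 : IntervalIntegrable (fun x : ℝ => x ^ (σ - 1)) volume 0 (T - s) :=
    intervalIntegral.intervalIntegrable_rpow' (by linarith)
  have h2 : IntervalIntegrable (fun x : ℝ => (x - s) ^ (σ - 1)) volume s T := by
    simpa using h1.comp_sub_right s
  exact h2.mul_continuousOn
    ((continuous_const.sub continuous_id).rpow_const (fun _ => Or.inr hm)).continuousOn

lemma betaKernel_integral {σ m : ℝ} (s T : ℝ) (hsT : s < T) :
    ∫ t in s..T, (t - s) ^ (σ - 1) * (T - t) ^ m =
      (∫ x in (0:ℝ)..1, x ^ (σ - 1) * (1 - x) ^ m) * (T - s) ^ (m + σ) := by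
  have hpos : 0 < T - s := sub_pos.2 hsT
  have h := intervalIntegral.mul_integral_comp_mul_add (a := 0) (b := 1)
    (f := fun t => (t - s) ^ (σ - 1) * (T - t) ^ m) (T - s) s
  simp only [mul_zero, zero_add, mul_one, sub_add_cancel] at h
  rw [← h, ← intervalIntegral.integral_const_mul, mul_comm,
    ← intervalIntegral.integral_const_mul]
  refine intervalIntegral.integral_congr fun x hx => ?_
  rw [Set.uIcc_of_le zero_le_one] at hx
  have e1 : (T - s) * x + s - s = (T - s) * x := by ring
  have e2 : T - ((T - s) * x + s) = (T - s) * (1 - x) := by ring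
  have e3 : (T - s) ^ (m + σ) = (T - s) * ((T - s) ^ (σ - 1) * (T - s) ^ m) := by
    rw [show m + σ = 1 + ((σ - 1) + m) by ring, Real.rpow_add hpos, Real.rpow_add hpos,
      Real.rpow_one]
  simp only [e1, e2]
  rw [Real.mul_rpow hpos.le hx.1, Real.mul_rpow hpos.le (by linarith [hx.2]), e3]
  ring

/-- The adjoint of `rlInt σ` maps `(T - t) ^ m` to a positive multiple of `(T - t) ^ (m + σ)`;
the multiple is a Beta value over `Γ(σ)`, and only its positivity and its independence of `T`
are ever used. -/
lemma rlInt_dual {σ m : ℝ} (hσ : 0 < σ) (hm : 0 ≤ m) :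
    ∃ c > 0, ∀ T > (0:ℝ), ∀ u : ℝ → ℝ, IntervalIntegrable u volume 0 T →
      ∫ t in (0:ℝ)..T, rlInt σ u t * (T - t) ^ m =
        c * ∫ s in (0:ℝ)..T, u s * (T - s) ^ (m + σ) := by
  set β : ℝ := ∫ x in (0:ℝ)..1, x ^ (σ - 1) * (1 - x) ^ m with hβ
  have hβpos : 0 < β := by
    refine intervalIntegral.intervalIntegral_pos_of_pos_on ?_ ?_ one_pos
    · simpa using betaKernel_intervalIntegrable hσ hm 0 1
    · intro x hx
      exact mul_pos (Real.rpow_pos_of_pos hx.1 _) (Real.rpow_pos_of_pos (by linarith [hx.2]) _)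
  have hΓ := Real.Gamma_pos_of_pos hσ
  refine ⟨1 / Real.Gamma σ * β, by positivity, fun T hT u hu => ?_⟩
  have huI : Integrable u (volume.restrict (Set.Ioc 0 T)) :=
    (intervalIntegrable_iff_integrableOn_Ioc_of_le hT.le).1 hu
  let F : ℝ → ℝ → ℝ := fun t s =>
    (Set.Ioi s).indicator (fun t => (t - s) ^ (σ - 1) * (T - t) ^ m) t * u s
  -- the fibre of the kernel over a fixed `s ∈ (0, T]`
  have hfib : ∀ s ∈ Set.Ioc (0:ℝ) T, Set.Ioi s ∩ Set.Ioc 0 T = Set.Ioc s T := by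
    intro s hs; ext t; simp only [Set.mem_inter_iff, Set.mem_Ioi, Set.mem_Ioc]
    constructor
    · rintro ⟨h1, -, h3⟩; exact ⟨h1, h3⟩
    · rintro ⟨h1, h3⟩; exact ⟨h1, hs.1.trans h1, h3⟩
  have hkint : ∀ s ∈ Set.Ioc (0:ℝ) T, Integrable
      ((Set.Ioi s).indicator (fun t => (t - s) ^ (σ - 1) * (T - t) ^ m))
      (volume.restrict (Set.Ioc 0 T)) := by
    intro s hs
    rw [integrable_indicator_iff measurableSet_Ioi, IntegrableOn,
      Measure.restrict_restrict measurableSet_Ioi, hfib s hs]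
    exact (intervalIntegrable_iff_integrableOn_Ioc_of_le hs.2).1
      (betaKernel_intervalIntegrable hσ hm s T)
  have hkval : ∀ s ∈ Set.Ioc (0:ℝ) T,
      ∫ t in Set.Ioc 0 T, (Set.Ioi s).indicator (fun t => (t - s) ^ (σ - 1) * (T - t) ^ m) t =
        β * (T - s) ^ (m + σ) := by
    intro s hs
    rw [integral_indicator measurableSet_Ioi, Measure.restrict_restrict measurableSet_Ioi,
      hfib s hs, ← intervalIntegral.integral_of_le hs.2]
    rcases hs.2.lt_or_eq with h | h
    · exact betaKernel_integral s T h
    · subst h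
      simp [Real.zero_rpow (by linarith : m + σ ≠ 0)]
  have hcont : Continuous fun s : ℝ => (T - s) ^ (m + σ) :=
    (continuous_const.sub continuous_id).rpow_const (fun _ => Or.inr (by linarith))
  have huw : IntervalIntegrable (fun s => u s * (T - s) ^ (m + σ)) volume 0 T :=
    hu.mul_continuousOn hcont.continuousOn
  have huwI := (intervalIntegrable_iff_integrableOn_Ioc_of_le hT.le).1 huw
  have hFm : AEStronglyMeasurable (Function.uncurry F)
      ((volume.restrict (Set.Ioc 0 T)).prod (volume.restrict (Set.Ioc 0 T))) := by
    refine AEStronglyMeasurable.mul ?_ huI.1.comp_snd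
    have : (fun x : ℝ × ℝ => (Set.Ioi x.2).indicator
        (fun t => (t - x.2) ^ (σ - 1) * (T - t) ^ m) x.1) =
        {x : ℝ × ℝ | x.2 < x.1}.indicator
          (fun x => (x.1 - x.2) ^ (σ - 1) * (T - x.1) ^ m) := by
      ext x; simp [Set.indicator]
    rw [this]
    refine (Measurable.indicator ?_ (measurableSet_lt measurable_snd measurable_fst)
      ).aestronglyMeasurable
    fun_prop
  have hFint : Integrable (Function.uncurry F)
      ((volume.restrict (Set.Ioc 0 T)).prod (volume.restrict (Set.Ioc 0 T))) := by
    rw [integrable_prod_iff' hFm]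
    constructor
    · filter_upwards [ae_restrict_mem measurableSet_Ioc] with s hs
      exact (hkint s hs).mul_const (u s)
    · refine (huwI.norm.const_mul β).congr ?_
      filter_upwards [ae_restrict_mem measurableSet_Ioc] with s hs
      have : ∫ t in Set.Ioc 0 T, ‖Function.uncurry F (t, s)‖ =
          ∫ t in Set.Ioc 0 T, (Set.Ioi s).indicator
            (fun t => (t - s) ^ (σ - 1) * (T - t) ^ m) t * |u s| := by
        refine setIntegral_congr_fun measurableSet_Ioc fun t ht => ?_
        simp only [Function.uncurry, F, norm_mul, Real.norm_eq_abs]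
        congr 1
        refine abs_of_nonneg (Set.indicator_apply_nonneg fun h => ?_)
        exact mul_nonneg (Real.rpow_nonneg (sub_nonneg.2 (le_of_lt h)) _)
          (Real.rpow_nonneg (sub_nonneg.2 ht.2) _)
      rw [this, integral_mul_const, hkval s hs, Real.norm_eq_abs, abs_mul,
        abs_of_nonneg (Real.rpow_nonneg (sub_nonneg.2 hs.2) (m + σ))]
      ring
  have hswap := integral_integral_swap hFint
  have hL : ∫ t in (0:ℝ)..T, rlInt σ u t * (T - t) ^ m =
      1 / Real.Gamma σ * ∫ t in Set.Ioc 0 T, ∫ s in Set.Ioc 0 T, F t s := by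
    rw [intervalIntegral.integral_of_le hT.le, ← integral_const_mul]
    refine setIntegral_congr_fun measurableSet_Ioc fun t ht => ?_
    have h1 : ∫ s in Set.Ioc 0 T, F t s =
        ∫ s in Set.Ioc 0 T, (Set.Iio t).indicator
          (fun s => (t - s) ^ (σ - 1) * u s * (T - t) ^ m) s := by
      congr 1; ext s
      by_cases h : s < t
      · simp only [F, Set.indicator, Set.mem_Ioi, Set.mem_Iio, h, if_true]; ring
      · simp [F, Set.indicator, h]
    have h2 : Set.Iio t ∩ Set.Ioc 0 T = Set.Ioo 0 t := by
      ext s; simp only [Set.mem_inter_iff, Set.mem_Iio, Set.mem_Ioc, Set.mem_Ioo]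
      constructor
      · rintro ⟨a1, a2, a3⟩; exact ⟨a2, a1⟩
      · rintro ⟨a1, a2⟩; exact ⟨a2, a1, a2.le.trans ht.2⟩
    simp only [h1]
    rw [integral_indicator measurableSet_Iio, Measure.restrict_restrict measurableSet_Iio, h2,
      ← integral_Ioc_eq_integral_Ioo, ← intervalIntegral.integral_of_le ht.1.le,
      intervalIntegral.integral_mul_const, rlInt]
    ring
  rw [hL, hswap, mul_assoc]
  congr 1
  rw [intervalIntegral.integral_of_le hT.le, ← integral_const_mul]
  refine setIntegral_congr_fun measurableSet_Ioc fun s hs => ?_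
  simp only [F]
  rw [integral_mul_const, hkval s hs]
  ring

/-- `rlInt_dual` for the normalised weights `(1 - t / T) ^ m`. -/
lemma rlInt_dual_scaled {σ m : ℝ} (hσ : 0 < σ) (hm : 0 ≤ m) :
    ∃ c > 0, ∀ T > (0:ℝ), ∀ u : ℝ → ℝ, IntervalIntegrable u volume 0 T →
      ∫ t in (0:ℝ)..T, rlInt σ u t * (1 - t / T) ^ m =
        c * T ^ σ * ∫ s in (0:ℝ)..T, u s * (1 - s / T) ^ (m + σ) := by
  obtain ⟨c, hc, h⟩ := rlInt_dual hσ hm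
  refine ⟨c, hc, fun T hT u hu => ?_⟩
  have key : ∀ (v : ℝ → ℝ) (k : ℝ), ∫ t in (0:ℝ)..T, v t * (T - t) ^ k =
      T ^ k * ∫ t in (0:ℝ)..T, v t * (1 - t / T) ^ k := by
    intro v k
    rw [← intervalIntegral.integral_const_mul]
    refine intervalIntegral.integral_congr fun t ht => ?_
    rw [Set.uIcc_of_le hT.le] at ht
    have h1 : T - t = T * (1 - t / T) := by field_simp
    have h2 : 0 ≤ 1 - t / T := sub_nonneg.2 ((div_le_one hT).2 ht.2)
    simp only [h1]
    rw [Real.mul_rpow hT.le h2]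
    ring
  have h3 := h T hT u hu
  rw [key, key, Real.rpow_add hT] at h3
  have : T ^ m ≠ 0 := (Real.rpow_pos_of_pos hT _).ne'
  apply mul_left_cancel₀ this
  rw [h3]; ring

/-! ### The tested equation -/

lemma weight_integral {k T : ℝ} (hk : 0 ≤ k) (hT : 0 < T) :
    ∫ t in (0:ℝ)..T, (1 - t / T) ^ k = T / (k + 1) := by
  rw [intervalIntegral.integral_comp_sub_div (fun x : ℝ => x ^ k) hT.ne' 1]
  rw [zero_div, sub_zero, div_self hT.ne', sub_self, integral_rpow (Or.inl (by linarith)),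
    Real.one_rpow, Real.zero_rpow (by linarith), smul_eq_mul]
  ring

lemma weight_continuous {k : ℝ} (T : ℝ) (hk : 0 ≤ k) :
    Continuous fun t : ℝ => (1 - t / T) ^ k :=
  (continuous_const.sub (continuous_id.div_const T)).rpow_const (fun _ => Or.inr hk)

lemma rlInt_one (u : ℝ → ℝ) (t : ℝ) : rlInt 1 u t = ∫ s in (0:ℝ)..t, u s := by
  simp [rlInt]

/-- The first moment of the weight, obtained from `t = rlInt 1 1 t`. -/
lemma weight_moment {k : ℝ} (hk : 0 ≤ k) :
    ∃ c > 0, ∀ T > (0:ℝ), ∫ t in (0:ℝ)..T, t * (1 - t / T) ^ k = c * T ^ 2 := by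
  obtain ⟨c, hc, h⟩ := rlInt_dual_scaled one_pos hk
  refine ⟨c / (k + 1 + 1), by positivity, fun T hT => ?_⟩
  have h1 := h T hT (fun _ => 1) (by simp)
  simp only [rlInt_one, intervalIntegral.integral_const, one_mul, smul_eq_mul, mul_one, sub_zero,
    Real.rpow_one] at h1
  rw [h1, weight_integral (by linarith) hT]
  ring

/-- Since `w s - w'(0) s - w 0 = o(s)`, its fractional integral of order `2 - α > 0` is `o(t)`;
hence its derivative at `0` vanishes. -/
lemma deriv_capKernel_zero {α : ℝ} {w : ℝ → ℝ} (hα2 : α < 2)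
    (hw : DifferentiableAt ℝ w 0) (hd : DifferentiableAt ℝ (capKernel α w) 0) :
    deriv (capKernel α w) 0 = 0 := by
  have hσ : 0 < 2 - α := by linarith
  have hg : capKernel α w = rlInt (2 - α) (fun s => w s - deriv w 0 * s - w 0) := by
    simp [capKernel, hα2.ne]
  have hΓ := Real.Gamma_pos_of_pos hσ
  have hlit := hw.hasDerivAt.isLittleO
  have hev : ∀ᶠ s in nhds (0:ℝ), |w s - deriv w 0 * s - w 0| ≤ |s| := by
    filter_upwards [hlit.bound one_pos] with s hs
    have e : w s - deriv w 0 * s - w 0 = w s - w 0 - (s - 0) • deriv w 0 := by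
      simp; ring
    rw [e]; simpa using hs
  obtain ⟨δ, hδ, hball⟩ := Metric.eventually_nhds_iff.1 hev
  have hbound : ∀ t ∈ Set.Ioo (0:ℝ) δ,
      |capKernel α w t / t| ≤ 1 / Real.Gamma (2 - α) / (2 - α) * t ^ (2 - α) := by
    intro t ht
    have hker : IntervalIntegrable (fun s : ℝ => (t - s) ^ (2 - α - 1) * t) volume 0 t := by
      have h1 : IntervalIntegrable (fun x : ℝ => x ^ (2 - α - 1)) volume 0 t :=
        intervalIntegral.intervalIntegrable_rpow' (by linarith)
      have h2 := (h1.comp_sub_left t).symm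
      simp only [sub_zero, sub_self] at h2
      exact h2.mul_const t
    have h3 : ‖∫ s in (0:ℝ)..t, (t - s) ^ (2 - α - 1) * (w s - deriv w 0 * s - w 0)‖ ≤
        ∫ s in (0:ℝ)..t, (t - s) ^ (2 - α - 1) * t := by
      refine intervalIntegral.norm_integral_le_of_norm_le ht.1.le ?_ hker
      refine Eventually.of_forall fun s hs => ?_
      have hts : 0 ≤ (t - s) ^ (2 - α - 1) := Real.rpow_nonneg (sub_nonneg.2 hs.2) _
      rw [norm_mul, Real.norm_of_nonneg hts, Real.norm_eq_abs]
      refine mul_le_mul_of_nonneg_left ?_ hts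
      have := hball (y := s) (by
        rw [Real.dist_eq, sub_zero, abs_of_pos hs.1]; linarith [hs.2, ht.2])
      rw [abs_of_pos hs.1] at this
      exact this.trans hs.2
    have h4 : ∫ s in (0:ℝ)..t, (t - s) ^ (2 - α - 1) * t = t ^ (2 - α) / (2 - α) * t := by
      rw [intervalIntegral.integral_mul_const,
        intervalIntegral.integral_comp_sub_left (fun x : ℝ => x ^ (2 - α - 1)) t,
        integral_rpow (Or.inl (by linarith))]
      simp [Real.zero_rpow hσ.ne']
    rw [h4] at h3
    rw [hg, rlInt, abs_div, abs_of_pos ht.1, div_le_iff₀ ht.1, abs_mul,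
      abs_of_pos (by positivity : 0 < 1 / Real.Gamma (2 - α))]
    calc _ ≤ 1 / Real.Gamma (2 - α) * (t ^ (2 - α) / (2 - α) * t) :=
          mul_le_mul_of_nonneg_left h3 (by positivity)
      _ = _ := by ring
  have hlim : Tendsto (fun t => capKernel α w t / t) (nhdsWithin 0 (Set.Ioi 0)) (nhds 0) := by
    have hz : Tendsto (fun t : ℝ => 1 / Real.Gamma (2 - α) / (2 - α) * t ^ (2 - α))
        (nhdsWithin 0 (Set.Ioi 0)) (nhds 0) := by
      have := ((Real.continuous_rpow_const hσ.le).tendsto 0).const_mul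
        (1 / Real.Gamma (2 - α) / (2 - α))
      simp only [Real.zero_rpow hσ.ne', mul_zero] at this
      exact this.mono_left nhdsWithin_le_nhds
    refine squeeze_zero_norm' ?_ hz
    filter_upwards [Ioo_mem_nhdsGT hδ] with t ht using hbound t ht
  have hslope := (hasDerivWithinAt_iff_tendsto_slope' (s := Set.Ioi (0:ℝ)) (by simp)).1
    hd.hasDerivAt.hasDerivWithinAt
  refine tendsto_nhds_unique hslope (hlim.congr fun t => ?_)
  have h0 : capKernel α w 0 = 0 := by rw [hg]; simp [rlInt]
  rw [slope_def_field, h0, sub_zero, sub_zero]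

/-- Testing the equation with `(1 - t / T) ^ (l - γ)` and moving the fractional operators onto the
weight by `rlInt_dual_scaled`. -/
lemma tested_equation {γ α a l : ℝ} {f w : ℝ → ℝ}
    (hγ : 0 < γ) (hα1 : 1 < α) (hα2 : α < 2) (ha : 0 < a) (hl : γ + α + 2 ≤ l)
    (hf : ∀ T > (0:ℝ), IntervalIntegrable f volume 0 T)
    (hw : ContDiff ℝ 1 w)
    (hAC : ∀ T > (0:ℝ), AC2On (capKernel α w) T)
    (heq : ∀ᵐ t ∂(volume.restrict (Set.Ici (0:ℝ))), caputoD α w t + a * w t = rlInt γ f t) :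
    ∃ A > 0, ∃ B > 0, ∃ D > 0, ∃ E > 0, ∀ T > (0:ℝ),
      ∫ t in (0:ℝ)..T, f t * (1 - t / T) ^ l =
        A * T ^ (-γ - α) * (∫ t in (0:ℝ)..T, w t * (1 - t / T) ^ (l - γ - α))
        - B * deriv w 0 * T ^ (2 - γ - α) - D * w 0 * T ^ (1 - γ - α)
        + E * T ^ (-γ) * ∫ t in (0:ℝ)..T, w t * (1 - t / T) ^ (l - γ) := by
  obtain ⟨c1, hc1, H1⟩ := rlInt_dual_scaled hγ (m := l - γ) (by linarith)
  obtain ⟨c2, hc2, H2⟩ := rlInt_dual_scaled one_pos (m := l - γ - 1) (by linarith)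
  obtain ⟨c3, hc3, H3⟩ := rlInt_dual_scaled one_pos (m := l - γ - 2) (by linarith)
  obtain ⟨c4, hc4, H4⟩ := rlInt_dual_scaled (by linarith : 0 < 2 - α) (m := l - γ - 2)
    (by linarith)
  have hk0 : 0 ≤ l - γ - α := by linarith
  obtain ⟨c5, hc5, H5⟩ := weight_moment hk0
  have hk1 : 0 < l - γ - α + 1 := by linarith
  refine ⟨c4 / (c1 * c2 * c3), by positivity, c4 * c5 / (c1 * c2 * c3), by positivity,
    c4 / (c1 * c2 * c3 * (l - γ - α + 1)), by positivity, a / c1, by positivity, fun T hT => ?_⟩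
  obtain ⟨hdiff, hker, hprim⟩ := hAC T hT
  set g := capKernel α w with hgdef
  have hg : g = rlInt (2 - α) (fun s => w s - deriv w 0 * s - w 0) := by
    simp [hgdef, capKernel, hα2.ne]
  have hg'0 : deriv g 0 = 0 := deriv_capKernel_zero hα2
    (hw.differentiable one_ne_zero).differentiableAt (hdiff 0 ⟨le_rfl, hT.le⟩)
  have hg0 : g 0 = 0 := by rw [hg]; simp [rlInt]
  have hg' : ∀ t ∈ Set.Icc 0 T, deriv g t = rlInt 1 (deriv (deriv g)) t := by
    intro t ht; rw [rlInt_one, hprim t ht, hg'0, zero_add]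
  have hg'c : ContinuousOn (deriv g) (Set.Icc 0 T) := by
    have h := intervalIntegral.continuousOn_primitive_interval' hker
      (by simp : (0:ℝ) ∈ Set.uIcc 0 T)
    rw [Set.uIcc_of_le hT.le] at h
    exact h.congr fun t ht => by rw [hg' t ht, rlInt_one]
  have hg'i : ∀ t ∈ Set.Icc 0 T, IntervalIntegrable (deriv g) volume 0 t := by
    intro t ht
    refine (hg'c.mono ?_).intervalIntegrable
    rw [Set.uIcc_of_le ht.1]; exact Set.Icc_subset_Icc_right ht.2
  have hgp : ∀ t ∈ Set.Icc 0 T, g t = rlInt 1 (deriv g) t := by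
    intro t ht
    rw [rlInt_one, intervalIntegral.integral_eq_sub_of_hasDerivAt (f := g) _ (hg'i t ht), hg0, sub_zero]
    intro x hx
    rw [Set.uIcc_of_le ht.1] at hx
    exact (hdiff x ⟨hx.1, hx.2.trans ht.2⟩).hasDerivAt
  have hTi : T ∈ Set.Icc 0 T := ⟨hT.le, le_rfl⟩
  have hwc : Continuous w := hw.continuous
  have wint : ∀ {k : ℝ}, 0 ≤ k → ∀ {u : ℝ → ℝ}, IntervalIntegrable u volume 0 T →
      IntervalIntegrable (fun t => u t * (1 - t / T) ^ k) volume 0 T :=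
    fun hk _ hu => hu.mul_continuousOn (weight_continuous T hk).continuousOn
  have E1 := H1 T hT f (hf T hT)
  have E2 := H2 T hT _ hker
  have E3 := H3 T hT _ (hg'i T hTi)
  have E4 := H4 T hT (fun s => w s - deriv w 0 * s - w 0)
    ((by fun_prop : Continuous fun s => w s - deriv w 0 * s - w 0).intervalIntegrable 0 T)
  have E2' : ∫ t in (0:ℝ)..T, rlInt 1 (deriv (deriv g)) t * (1 - t / T) ^ (l - γ - 1) =
      ∫ t in (0:ℝ)..T, deriv g t * (1 - t / T) ^ (l - γ - 1) := by
    refine intervalIntegral.integral_congr fun t ht => ?_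
    rw [Set.uIcc_of_le hT.le] at ht
    simp only [hg' t ht]
  have E3' : ∫ t in (0:ℝ)..T, rlInt 1 (deriv g) t * (1 - t / T) ^ (l - γ - 2) =
      ∫ t in (0:ℝ)..T, g t * (1 - t / T) ^ (l - γ - 2) := by
    refine intervalIntegral.integral_congr fun t ht => ?_
    rw [Set.uIcc_of_le hT.le] at ht
    simp only [← hgp t ht]
  rw [show l - γ + γ = l by ring] at E1
  rw [E2', show l - γ - 1 + 1 = l - γ by ring] at E2
  rw [E3', show l - γ - 2 + 1 = l - γ - 1 by ring, E2] at E3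
  rw [← hg, E3, show l - γ - 2 + (2 - α) = l - γ - α by ring] at E4
  have E5 : ∫ t in (0:ℝ)..T, (w t - deriv w 0 * t - w 0) * (1 - t / T) ^ (l - γ - α) =
      (∫ t in (0:ℝ)..T, w t * (1 - t / T) ^ (l - γ - α)) - deriv w 0 * (c5 * T ^ 2)
        - w 0 * (T / (l - γ - α + 1)) := by
    rw [← H5 T hT, ← weight_integral hk0 hT, ← intervalIntegral.integral_const_mul,
      ← intervalIntegral.integral_const_mul, ← intervalIntegral.integral_sub,
      ← intervalIntegral.integral_sub]
    · refine intervalIntegral.integral_congr fun t _ => ?_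
      ring
    · exact (wint hk0 (hwc.intervalIntegrable 0 T)).sub
        ((wint hk0 (continuous_id.intervalIntegrable 0 T)).const_mul _)
    · exact ((weight_continuous T hk0).intervalIntegrable 0 T).const_mul _
    · exact wint hk0 (hwc.intervalIntegrable 0 T)
    · exact (wint hk0 (continuous_id.intervalIntegrable 0 T)).const_mul _
  have E6 : ∫ t in (0:ℝ)..T, rlInt γ f t * (1 - t / T) ^ (l - γ) =
      (∫ t in (0:ℝ)..T, deriv (deriv g) t * (1 - t / T) ^ (l - γ)) +
        a * ∫ t in (0:ℝ)..T, w t * (1 - t / T) ^ (l - γ) := by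
    have hk : 0 ≤ l - γ := by linarith
    rw [← intervalIntegral.integral_const_mul, ← intervalIntegral.integral_add (wint hk hker)
      ((wint hk (hwc.intervalIntegrable 0 T)).const_mul a)]
    refine intervalIntegral.integral_congr_ae_restrict ?_
    rw [Set.uIoc_of_le hT.le]
    have := ae_restrict_of_ae_restrict_of_subset
      (fun x hx => hx.1.le : Set.Ioc (0:ℝ) T ⊆ Set.Ici 0) heq
    filter_upwards [this] with t ht
    rw [← ht, caputoD]; ring
  rw [E1] at E6
  rw [E5] at E4
  have hTγ : 0 < T ^ γ := Real.rpow_pos_of_pos hT _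
  have hTα : 0 < T ^ α := Real.rpow_pos_of_pos hT _
  have r1 : T ^ (2 - α) = T ^ 2 / T ^ α := by
    rw [Real.rpow_sub hT]; norm_num
  have r2 : T ^ (-γ - α) = 1 / (T ^ γ * T ^ α) := by
    rw [Real.rpow_sub hT, Real.rpow_neg hT.le]; field_simp
  have r3 : T ^ (2 - γ - α) = T ^ 2 / (T ^ γ * T ^ α) := by
    rw [Real.rpow_sub hT, Real.rpow_sub hT]; norm_num; field_simp
  have r4 : T ^ (1 - γ - α) = T / (T ^ γ * T ^ α) := by
    rw [Real.rpow_sub hT, Real.rpow_sub hT, Real.rpow_one]; field_simp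
  rw [r2, r3, r4, Real.rpow_neg hT.le]
  rw [r1, Real.rpow_one] at E4
  generalize (∫ t in (0:ℝ)..T, f t * (1 - t / T) ^ l) = If at *
  generalize (∫ t in (0:ℝ)..T, deriv (deriv g) t * (1 - t / T) ^ (l - γ)) = Ih at *
  generalize (∫ t in (0:ℝ)..T, w t * (1 - t / T) ^ (l - γ - α)) = Iw at *
  generalize (∫ t in (0:ℝ)..T, w t * (1 - t / T) ^ (l - γ)) = Iw' at *
  have hIh : Ih = c4 * (T ^ 2 / T ^ α) * (Iw - deriv w 0 * (c5 * T ^ 2)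
      - w 0 * (T / (l - γ - α + 1))) / (c3 * T * (c2 * T)) := by
    rw [eq_div_iff (by positivity), ← E4]; ring
  have hIf : If = (Ih + a * Iw') / (c1 * T ^ γ) := by
    rw [eq_div_iff (by positivity), ← E6]; ring
  rw [hIf, hIh]
  field_simp

/-! ### Estimates -/

/-- Young's inequality with a small constant in front of the first power. -/
lemma young_eps {p q : ℝ} (hpq : p.HolderConjugate q) {ε : ℝ} (hε : 0 < ε) :
    ∃ C > 0, ∀ x y : ℝ, 0 ≤ x → 0 ≤ y → x * y ≤ ε * x ^ p + C * y ^ q := by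
  have hp := hpq.pos
  have hq := hpq.symm.pos
  set δ : ℝ := (ε * p) ^ (1 / p) with hδ
  have hδp : 0 < δ := by positivity
  have hδpow : δ ^ p = ε * p := by
    rw [hδ, ← Real.rpow_mul (by positivity), one_div, inv_mul_cancel₀ hp.ne', Real.rpow_one]
  refine ⟨(1 / δ) ^ q / q, by positivity, fun x y hx hy => ?_⟩
  have h := Real.young_inequality_of_nonneg (by positivity : 0 ≤ δ * x)
    (by positivity : 0 ≤ 1 / δ * y) hpq
  rw [Real.mul_rpow hδp.le hx, Real.mul_rpow (by positivity) hy, hδpow] at h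
  have e1 : δ * x * (1 / δ * y) = x * y := by field_simp
  have e2 : ε * p * x ^ p / p = ε * x ^ p := by field_simp
  rw [e1, e2] at h
  calc _ ≤ _ := h
    _ = _ := by ring

lemma weight_mem {t T : ℝ} (hT : 0 < T) (ht : t ∈ Set.Icc 0 T) :
    0 ≤ 1 - t / T ∧ 1 - t / T ≤ 1 := by
  have h1 : t / T ≤ 1 := (div_le_one hT).2 ht.2
  have h2 : 0 ≤ t / T := div_nonneg ht.1 hT.le
  constructor <;> linarith

lemma abs_pow_continuous {w : ℝ → ℝ} {p : ℝ} (hw : Continuous w) (hp : 0 ≤ p) :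
    Continuous fun t => |w t| ^ p :=
  hw.abs.rpow_const fun _ => Or.inr hp

/-- Comparison of the tested nonlinearity with the tested linear terms, for weights
`(1 - t / T) ^ κ` of any exponent `κ ≤ l - γ - α`. -/
lemma tested_inequality {γ α p a b l κ : ℝ} {f w : ℝ → ℝ}
    (hγ : 0 < γ) (hα1 : 1 < α) (hα2 : α < 2) (hp : 1 < p) (ha : 0 < a)
    (hl : γ + α + 2 ≤ l) (hκ0 : 0 ≤ κ) (hκ : κ ≤ l - γ - α)
    (hf : ∀ T > (0:ℝ), IntervalIntegrable f volume 0 T)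
    (hw : ContDiff ℝ 1 w)
    (hAC : ∀ T > (0:ℝ), AC2On (capKernel α w) T)
    (heq : ∀ᵐ t ∂(volume.restrict (Set.Ici (0:ℝ))),
      caputoD α w t + a * w t = rlInt γ f t ∧ f t ≥ b * |w t| ^ p) :
    ∃ B > 0, ∃ D > 0, ∃ K > 0, ∀ T ≥ (1:ℝ),
      b * ∫ t in (0:ℝ)..T, |w t| ^ p * (1 - t / T) ^ l ≤
        -(B * deriv w 0 * T ^ (2 - γ - α)) + D * |w 0| * T ^ (1 - γ - α)
        + K * (T ^ (-γ) * ∫ t in (0:ℝ)..T, |w t| * (1 - t / T) ^ κ) := by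
  obtain ⟨A, hA, B, hB, D, hD, E, hE, H⟩ := tested_equation hγ hα1 hα2 ha hl hf hw hAC
    (heq.mono fun _ h => h.1)
  refine ⟨B, hB, D, hD, A + E, by positivity, fun T hT1 => ?_⟩
  have hT : 0 < T := by linarith
  have hwc := hw.continuous
  have hl0 : 0 ≤ l := by linarith
  have hlow : b * ∫ t in (0:ℝ)..T, |w t| ^ p * (1 - t / T) ^ l ≤
      ∫ t in (0:ℝ)..T, f t * (1 - t / T) ^ l := by
    rw [← intervalIntegral.integral_const_mul]
    refine intervalIntegral.integral_mono_ae_restrict hT.le ?_ ?_ ?_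
    · exact (((abs_pow_continuous hwc (by linarith)).mul
        (weight_continuous T hl0)).intervalIntegrable 0 T).const_mul b
    · exact (hf T hT).mul_continuousOn (weight_continuous T hl0).continuousOn
    · have := ae_restrict_of_ae_restrict_of_subset
        (fun x hx => hx.1 : Set.Icc (0:ℝ) T ⊆ Set.Ici 0) heq
      filter_upwards [this, ae_restrict_mem measurableSet_Icc] with t ht htm
      rw [← mul_assoc]
      exact mul_le_mul_of_nonneg_right ht.2 (Real.rpow_nonneg (weight_mem hT htm).1 _)
  set J := ∫ t in (0:ℝ)..T, |w t| * (1 - t / T) ^ κ with hJ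
  have hJ0 : 0 ≤ J := intervalIntegral.integral_nonneg hT.le fun t ht =>
    mul_nonneg (abs_nonneg _) (Real.rpow_nonneg (weight_mem hT ht).1 _)
  have hcomp : ∀ k, κ ≤ k → ∫ t in (0:ℝ)..T, w t * (1 - t / T) ^ k ≤ J := by
    intro k hk
    refine intervalIntegral.integral_mono_on hT.le ?_ ?_ fun t ht => ?_
    · exact (hwc.mul (weight_continuous T (hκ0.trans hk))).intervalIntegrable 0 T
    · exact (hwc.abs.mul (weight_continuous T hκ0)).intervalIntegrable 0 T
    · obtain ⟨h0, h1⟩ := weight_mem hT ht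
      have hle : (1 - t / T) ^ k ≤ (1 - t / T) ^ κ := by
        rcases h0.eq_or_lt with h | h
        · rw [← h]
          rcases hκ0.eq_or_lt with h' | h'
          · rw [← h', Real.rpow_zero]; exact Real.zero_rpow_le_one _
          · rw [Real.zero_rpow h'.ne', Real.zero_rpow (h'.trans_le hk).ne']
        · exact Real.rpow_le_rpow_of_exponent_ge h h1 hk
      exact mul_le_mul (le_abs_self _) hle (Real.rpow_nonneg h0 _) (abs_nonneg _)
  have h1 : A * T ^ (-γ - α) * (∫ t in (0:ℝ)..T, w t * (1 - t / T) ^ (l - γ - α)) ≤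
      A * (T ^ (-γ) * J) := by
    have hle : T ^ (-γ - α) ≤ T ^ (-γ) :=
      Real.rpow_le_rpow_of_exponent_le hT1 (by linarith)
    calc _ ≤ A * T ^ (-γ - α) * J := mul_le_mul_of_nonneg_left (hcomp _ hκ) (by positivity)
      _ = A * (T ^ (-γ - α) * J) := by ring
      _ ≤ _ := by gcongr
  have h2 : E * T ^ (-γ) * (∫ t in (0:ℝ)..T, w t * (1 - t / T) ^ (l - γ)) ≤
      E * (T ^ (-γ) * J) := by
    rw [← mul_assoc]
    exact mul_le_mul_of_nonneg_left (hcomp _ (by linarith)) (by positivity)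
  have h3 : -(D * w 0 * T ^ (1 - γ - α)) ≤ D * |w 0| * T ^ (1 - γ - α) := by
    have : 0 ≤ D * T ^ (1 - γ - α) := by positivity
    nlinarith [mul_le_mul_of_nonneg_left (neg_abs_le (w 0)) this]
  have h4 := H T hT
  linarith

/-- Absorption: the linear term is a small multiple of the nonlinear one plus a power of `T`. -/
lemma young_weighted {γ p q l κ : ℝ} {w : ℝ → ℝ} (hpq : p.HolderConjugate q)
    (hl0 : 0 ≤ l) (hκ : κ * p = l) (hw : Continuous w) {ε : ℝ} (hε : 0 < ε) :
    ∃ C > 0, ∀ T ≥ (1:ℝ), T ^ (-γ) * ∫ t in (0:ℝ)..T, |w t| * (1 - t / T) ^ κ ≤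
      ε * (∫ t in (0:ℝ)..T, |w t| ^ p * (1 - t / T) ^ l) + C * T ^ (1 - γ * q) := by
  obtain ⟨C, hC, hY⟩ := young_eps hpq hε
  refine ⟨C, hC, fun T hT1 => ?_⟩
  have hT : 0 < T := by linarith
  have hp := hpq.pos
  have hκ0 : 0 ≤ κ := by
    rw [← hκ] at hl0; exact nonneg_of_mul_nonneg_left hl0 hp
  have e1 : C * T ^ (1 - γ * q) = ∫ _ in (0:ℝ)..T, C * (T ^ (-γ)) ^ q := by
    rw [intervalIntegral.integral_const, sub_zero, smul_eq_mul, ← Real.rpow_mul hT.le,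
      show 1 - γ * q = 1 + (-γ * q) by ring, Real.rpow_add hT, Real.rpow_one]
    ring
  have hi : IntervalIntegrable (fun t => |w t| ^ p * (1 - t / T) ^ l) volume 0 T :=
    ((abs_pow_continuous hw hp.le).mul (weight_continuous T hl0)).intervalIntegrable 0 T
  rw [e1, ← intervalIntegral.integral_const_mul, ← intervalIntegral.integral_const_mul,
    ← intervalIntegral.integral_add (hi.const_mul ε) (by simp)]
  refine intervalIntegral.integral_mono_on hT.le ?_ ?_ fun t ht => ?_
  · exact ((hw.abs.mul (weight_continuous T hκ0)).intervalIntegrable 0 T).const_mul _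
  · exact (hi.const_mul ε).add (by simp)
  · obtain ⟨h0, -⟩ := weight_mem hT ht
    have h := hY (|w t| * (1 - t / T) ^ κ) (T ^ (-γ))
      (mul_nonneg (abs_nonneg _) (Real.rpow_nonneg h0 _)) (by positivity)
    rw [Real.mul_rpow (abs_nonneg _) (Real.rpow_nonneg h0 _), ← Real.rpow_mul h0, hκ] at h
    linarith

/-- If `w ∈ L^p(0, ∞)` and `γ ≥ 1/q`, then `T ^ (-γ) ∫₀ᵀ |w| → 0`. When `γ = 1/q` Hölder's
inequality gives only boundedness; the decay comes from applying it to the tail of `w`. -/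
lemma mean_decay {γ p q M : ℝ} {w : ℝ → ℝ} (hpq : p.HolderConjugate q) (hγ : 0 < γ)
    (hγq : 1 ≤ γ * q) (hw : Continuous w)
    (hM : ∀ R ≥ (0:ℝ), ∫ t in (0:ℝ)..R, |w t| ^ p ≤ M) :
    Tendsto (fun T : ℝ => T ^ (-γ) * ∫ t in (0:ℝ)..T, |w t|) atTop (nhds 0) := by
  have hp := hpq.pos
  have hpc := abs_pow_continuous hw hp.le
  have hii : ∀ c d, IntervalIntegrable (fun t => |w t| ^ p) volume c d :=
    fun c d => hpc.intervalIntegrable c d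
  rw [Metric.tendsto_atTop]
  intro η hη
  obtain ⟨C, hC, hY⟩ := young_eps hpq.symm (by positivity : 0 < η / 4)
  -- the total mass of `|w| ^ p` and a point after which little of it is left
  set S : Set ℝ := Set.image (fun R => ∫ t in (0:ℝ)..R, |w t| ^ p) (Set.Ici 0) with hS
  have hSb : BddAbove S := ⟨M, by rintro _ ⟨R, hR, rfl⟩; exact hM R hR⟩
  have hSn : S.Nonempty := ⟨_, 0, Set.mem_Ici.2 le_rfl, rfl⟩
  obtain ⟨_, ⟨R, hR, rfl⟩, hRlt⟩ := exists_lt_of_lt_csSup hSn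
    (sub_lt_self (sSup S) (by positivity : 0 < η / (4 * C)))
  have hR : 0 ≤ R := hR
  have htail : ∀ T ≥ R, ∫ t in R..T, |w t| ^ p ≤ η / (4 * C) := by
    intro T hT
    have h1 := le_csSup hSb ⟨T, Set.mem_Ici.2 (hR.trans hT), rfl⟩
    have h2 := intervalIntegral.integral_add_adjacent_intervals (hii 0 R) (hii R T)
    simp only at h1 hRlt
    linarith
  have hJ : Tendsto (fun T : ℝ => T ^ (-γ) * ∫ t in (0:ℝ)..R, |w t|) atTop (nhds 0) := by
    simpa using (tendsto_rpow_neg_atTop hγ).mul_const (∫ t in (0:ℝ)..R, |w t|)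
  obtain ⟨T₀, hT₀⟩ := Filter.eventually_atTop.1
    (hJ.eventually_lt_const (by positivity : 0 < η / 4))
  refine ⟨max T₀ (max R 1), fun T hT => ?_⟩
  have hTT₀ : T₀ ≤ T := (le_max_left _ _).trans hT
  have hTR : R ≤ T := (le_max_left _ _).trans ((le_max_right _ _).trans hT)
  have hT1 : 1 ≤ T := (le_max_right _ _).trans ((le_max_right _ _).trans hT)
  have hTp : 0 < T := by linarith
  have habs := hw.abs
  have hsplit := intervalIntegral.integral_add_adjacent_intervals
    (habs.intervalIntegrable 0 R (μ := volume)) (habs.intervalIntegrable R T)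
  have hq : (T ^ (-γ)) ^ q ≤ T⁻¹ := by
    rw [← Real.rpow_mul hTp.le, ← Real.rpow_neg_one]
    exact Real.rpow_le_rpow_of_exponent_le hT1 (by linarith)
  have hfar : T ^ (-γ) * ∫ t in R..T, |w t| ≤ η / 4 + η / 4 := by
    have h1 : T ^ (-γ) * ∫ t in R..T, |w t| ≤
        ∫ t in R..T, (η / 4 * T⁻¹ + C * |w t| ^ p) := by
      rw [← intervalIntegral.integral_const_mul]
      refine intervalIntegral.integral_mono_on hTR ?_ ?_ fun t _ => ?_
      · exact (habs.intervalIntegrable R T).const_mul _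
      · exact (continuous_const.add (continuous_const.mul hpc)).intervalIntegrable R T
      · have h := hY (T ^ (-γ)) (|w t|) (by positivity) (abs_nonneg _)
        have := mul_le_mul_of_nonneg_left hq (by positivity : 0 ≤ η / 4)
        linarith
    rw [intervalIntegral.integral_add (by simp) ((hii R T).const_mul C),
      intervalIntegral.integral_const, intervalIntegral.integral_const_mul, smul_eq_mul] at h1
    have h2 : (T - R) * (η / 4 * T⁻¹) ≤ η / 4 := by
      rw [← div_eq_mul_inv, mul_div_assoc', div_le_iff₀ hTp]
      nlinarith
    have h3 : C * ∫ t in R..T, |w t| ^ p ≤ η / 4 := by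
      calc _ ≤ C * (η / (4 * C)) := mul_le_mul_of_nonneg_left (htail T hTR) hC.le
        _ = η / 4 := by field_simp
    linarith
  have hnn : 0 ≤ T ^ (-γ) * ∫ t in (0:ℝ)..T, |w t| :=
    mul_nonneg (by positivity) (intervalIntegral.integral_nonneg hTp.le fun _ _ => abs_nonneg _)
  rw [Real.dist_eq, sub_zero, abs_of_nonneg hnn, ← hsplit, mul_add]
  have := hT₀ T hTT₀
  linarith

/-- On `[0, R]` the weight is at least `2 ^ (-l)` as soon as `T ≥ 2 R`. -/
lemma mass_le_weighted {p l R T : ℝ} {w : ℝ → ℝ} (hw : Continuous w) (hp : 0 ≤ p) (hl : 0 ≤ l)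
    (hR : 0 ≤ R) (hT : 0 < T) (hRT : 2 * R ≤ T) :
    ∫ t in (0:ℝ)..R, |w t| ^ p ≤ 2 ^ l * ∫ t in (0:ℝ)..T, |w t| ^ p * (1 - t / T) ^ l := by
  have hc := abs_pow_continuous hw hp
  have hi : ∀ c d, IntervalIntegrable (fun t => |w t| ^ p * (1 - t / T) ^ l) volume c d :=
    fun c d => (hc.mul (weight_continuous T hl)).intervalIntegrable c d
  have h1 : ∫ t in (0:ℝ)..R, |w t| ^ p ≤
      2 ^ l * ∫ t in (0:ℝ)..R, |w t| ^ p * (1 - t / T) ^ l := by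
    rw [← intervalIntegral.integral_const_mul]
    refine intervalIntegral.integral_mono_on hR (hc.intervalIntegrable 0 R)
      ((hi 0 R).const_mul _) fun t ht => ?_
    have ht2 : t / T ≤ 1 / 2 := by rw [div_le_iff₀ hT]; linarith [ht.2]
    have h2 : 1 ≤ (2:ℝ) ^ l * (1 - t / T) ^ l := by
      rw [← Real.mul_rpow (by norm_num) (by linarith)]
      exact Real.one_le_rpow (by linarith) hl
    have h3 : 0 ≤ |w t| ^ p := Real.rpow_nonneg (abs_nonneg _) _
    nlinarith [mul_le_mul_of_nonneg_left h2 h3]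
  refine h1.trans (mul_le_mul_of_nonneg_left ?_ (by positivity))
  refine intervalIntegral.integral_mono_interval le_rfl hR (by linarith) ?_ (hi 0 T)
  filter_upwards [ae_restrict_mem measurableSet_Ioc] with t ht
  exact mul_nonneg (Real.rpow_nonneg (abs_nonneg _) _)
    (Real.rpow_nonneg (weight_mem hT ⟨ht.1.le, ht.2⟩).1 _)

/-- The subcritical and critical cases: if the boundary terms `r T` vanish in the limit, the
absorbed inequality puts `w` in `L^p`, and then the unabsorbed one forces `w = 0`. -/
lemma eq_zero_of_vanishing_boundary {γ p q b l κ K : ℝ} {w r : ℝ → ℝ}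
    (hpq : p.HolderConjugate q) (hγ : 0 < γ) (hγq : 1 ≤ γ * q) (hb : 0 < b) (hl0 : 0 ≤ l)
    (hκ : κ * p = l) (hK : 0 < K) (hw : Continuous w) (hr : Tendsto r atTop (nhds 0))
    (H : ∀ T ≥ (1:ℝ), b * ∫ t in (0:ℝ)..T, |w t| ^ p * (1 - t / T) ^ l ≤
      r T + K * (T ^ (-γ) * ∫ t in (0:ℝ)..T, |w t| * (1 - t / T) ^ κ)) :
    ∀ t, 0 ≤ t → w t = 0 := by
  have hp := hpq.pos
  have hpc := abs_pow_continuous hw hp.le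
  have hκ0 : 0 ≤ κ := by
    rw [← hκ] at hl0; exact nonneg_of_mul_nonneg_left hl0 hp
  obtain ⟨C, hC, hYw⟩ := young_weighted (γ := γ) hpq hl0 hκ hw
    (by positivity : 0 < b / (2 * K))
  obtain ⟨T₁, hT₁⟩ := Filter.eventually_atTop.1 (hr.eventually_lt_const one_pos)
  have hbdd : ∀ R ≥ (0:ℝ), ∫ t in (0:ℝ)..R, |w t| ^ p ≤ 2 ^ l * (2 / b * (1 + K * C)) := by
    intro R hR
    set T := max (2 * R) (max T₁ 1)
    have hTR : 2 * R ≤ T := le_max_left _ _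
    have hTT₁ : T₁ ≤ T := (le_max_left _ _).trans (le_max_right _ _)
    have hT1 : 1 ≤ T := (le_max_right _ _).trans (le_max_right _ _)
    refine (mass_le_weighted hw hp.le hl0 hR (by linarith) hTR).trans
      (mul_le_mul_of_nonneg_left ?_ (by positivity))
    have h1 := H T hT1
    have h2 := mul_le_mul_of_nonneg_left (hYw T hT1) hK.le
    have h3 := hT₁ T hTT₁
    have h4 : T ^ (1 - γ * q) ≤ 1 := Real.rpow_le_one_of_one_le_of_nonpos hT1 (by linarith)
    have h5 := mul_le_mul_of_nonneg_left h4 (by positivity : 0 ≤ K * C)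
    set Y := ∫ t in (0:ℝ)..T, |w t| ^ p * (1 - t / T) ^ l
    have h6 : K * (b / (2 * K) * Y) = b / 2 * Y := by field_simp
    have h7 : b / 2 * Y ≤ 1 + K * C := by linarith
    calc Y = 2 / b * (b / 2 * Y) := by field_simp
      _ ≤ _ := mul_le_mul_of_nonneg_left h7 (by positivity)
  have hdecay := mean_decay hpq hγ hγq hw hbdd
  have hzero : ∀ R ≥ (0:ℝ), ∫ t in (0:ℝ)..R, |w t| ^ p ≤ 0 := by
    intro R hR
    have hlim : Tendsto (fun T : ℝ => 2 ^ l * ((r T + K * (T ^ (-γ) * ∫ t in (0:ℝ)..T, |w t|)) / b))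
        atTop (nhds 0) := by
      simpa using ((hr.add (hdecay.const_mul K)).div_const b).const_mul ((2:ℝ) ^ l)
    refine ge_of_tendsto hlim ?_
    filter_upwards [eventually_ge_atTop (2 * R), eventually_ge_atTop 1] with T hTR hT1
    have hTp : 0 < T := by linarith
    refine (mass_le_weighted hw hp.le hl0 hR hTp hTR).trans
      (mul_le_mul_of_nonneg_left ?_ (by positivity))
    rw [le_div_iff₀ hb, mul_comm]
    refine (H T hT1).trans ?_
    gcongr
    refine intervalIntegral.integral_mono_on hTp.le ?_ (hw.abs.intervalIntegrable 0 T)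
      fun t ht => ?_
    · exact (hw.abs.mul (weight_continuous T hκ0)).intervalIntegrable 0 T
    · obtain ⟨h0, h1⟩ := weight_mem hTp ht
      exact mul_le_of_le_one_right (abs_nonneg _) (Real.rpow_le_one h0 h1 hκ0)
  intro t ht
  by_contra hne
  have hpos : 0 < ∫ s in (0:ℝ)..(t + 1), |w s| ^ p := by
    refine intervalIntegral.integral_pos (by linarith) hpc.continuousOn
      (fun _ _ => Real.rpow_nonneg (abs_nonneg _) _) ⟨t, ⟨ht, by linarith⟩, ?_⟩
    exact Real.rpow_pos_of_pos (abs_pos.2 hne) _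
  linarith [hzero (t + 1) (by linarith)]

/-- The case of a growing boundary term: `w'(0) T ^ (2 - γ - α)` outgrows every term that
remains after absorption. -/
lemma false_of_growing_boundary {γ α p q b l κ B D K w₁ : ℝ} {w : ℝ → ℝ}
    (hpq : p.HolderConjugate q) (hexp : 1 - γ * q < 2 - γ - α) (hb : 0 < b) (hl0 : 0 ≤ l)
    (hκ : κ * p = l) (hK : 0 < K) (hB : 0 < B) (hw₁ : 0 < w₁) (hw : Continuous w)
    (H : ∀ T ≥ (1:ℝ), b * ∫ t in (0:ℝ)..T, |w t| ^ p * (1 - t / T) ^ l ≤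
      -(B * w₁ * T ^ (2 - γ - α)) + D * |w 0| * T ^ (1 - γ - α)
      + K * (T ^ (-γ) * ∫ t in (0:ℝ)..T, |w t| * (1 - t / T) ^ κ)) : False := by
  obtain ⟨C, hC, hYw⟩ := young_weighted (γ := γ) hpq hl0 hκ hw (by positivity : 0 < b / K)
  have hlim : Tendsto (fun T : ℝ => D * |w 0| * T ^ (-(1:ℝ)) +
      K * C * T ^ (-((2 - γ - α) - (1 - γ * q)))) atTop (nhds 0) := by
    simpa using ((tendsto_rpow_neg_atTop one_pos).const_mul (D * |w 0|)).add
      ((tendsto_rpow_neg_atTop (sub_pos.2 hexp)).const_mul (K * C))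
  have hle : B * w₁ ≤ 0 := by
    refine ge_of_tendsto hlim ?_
    filter_upwards [eventually_ge_atTop 1] with T hT1
    have hT : 0 < T := by linarith
    have h1 := H T hT1
    have h2 := mul_le_mul_of_nonneg_left (hYw T hT1) hK.le
    set Y := ∫ t in (0:ℝ)..T, |w t| ^ p * (1 - t / T) ^ l
    have h3 : K * (b / K * Y) = b * Y := by field_simp
    have hP : 0 < T ^ (2 - γ - α) := Real.rpow_pos_of_pos hT _
    have e1 : T ^ (1 - γ - α) = T ^ (-(1:ℝ)) * T ^ (2 - γ - α) := by
      rw [← Real.rpow_add hT]; congr 1; ring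
    have e2 : T ^ (1 - γ * q) = T ^ (-((2 - γ - α) - (1 - γ * q))) * T ^ (2 - γ - α) := by
      rw [← Real.rpow_add hT]; congr 1; ring
    rw [e1] at h1
    rw [e2] at h2
    refine le_of_mul_le_mul_right ?_ hP
    linarith
  exact absurd hle (not_le.2 (by positivity))

/-- Lemma 2.3 (viii): under conditions (a)–(d), no nontrivial global solution of ₀D_t^α w + a w = ₀I_t^γ f with f ≥ b|w|^p exists on [0,∞). -/
theorem blowup_viii
    (γ α p a b : ℝ) (f w : ℝ → ℝ)
    (hγ : 0 < γ) (hα1 : 1 < α) (hα2 : α < 2) (hp : 1 < p) (ha : 0 < a) (hb : 0 < b)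
    (hf : ∀ T > (0:ℝ), IntervalIntegrable f volume 0 T)
    (hw : ContDiff ℝ 1 w)
    (hw0 : ∃ t : ℝ, 0 ≤ t ∧ w t ≠ 0)
    (hAC : ∀ T > (0:ℝ), AC2On (capKernel α w) T)
    (heq : ∀ᵐ t ∂(volume.restrict (Set.Ici (0:ℝ))),
      caputoD α w t + a * w t = rlInt γ f t ∧ f t ≥ b * |w t| ^ p)
    (hcond :
      (2 < α + γ ∧ p * (1 - γ) ≤ 1) ∨
      (α + γ ≤ 2 ∧ deriv w 0 = 0 ∧ p * (1 - γ) ≤ 1) ∨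
      (α + γ = 2 ∧ 0 < deriv w 0 ∧ p * (1 - γ) ≤ 1) ∨
      (α + γ < 2 ∧ 0 < deriv w 0 ∧ p < 1 + γ / (α - 1))) :
    False := by
  set q : ℝ := p / (p - 1) with hq
  have hp1 : 0 < p - 1 := by linarith
  have hpq : p.HolderConjugate q := Real.HolderConjugate.conjExponent hp
  have hq1 : 1 < q := hpq.symm.lt
  -- chosen so that `l - l / p = l / q = γ + α + 3`, which leaves room for every weight exponent
  set l : ℝ := q * (γ + α + 3) with hldef
  have hκeq : l / p = l - γ - α - 3 := by
    rw [hldef, hq]; field_simp; ring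
  have hl : γ + α + 3 ≤ l := by
    rw [hldef]; nlinarith
  have hl0 : 0 ≤ l := by linarith
  have hκp : l / p * p = l := by field_simp
  obtain ⟨B, hB, D, hD, K, hK, H⟩ := tested_inequality (b := b) (l := l) (κ := l / p)
    hγ hα1 hα2 hp ha (by linarith) (by rw [hκeq]; linarith) (by rw [hκeq]; linarith)
    hf hw hAC heq
  have hwc := hw.continuous
  have hγq : p * (1 - γ) ≤ 1 → 1 ≤ γ * q := by
    intro h
    rw [hq, mul_div_assoc', le_div_iff₀ hp1]
    linarith
  have hD0 : Tendsto (fun T : ℝ => D * |w 0| * T ^ (1 - γ - α)) atTop (nhds 0) := by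
    have := (tendsto_rpow_neg_atTop (by linarith : 0 < γ + α - 1)).const_mul (D * |w 0|)
    rw [mul_zero] at this
    convert this using 4
    ring
  obtain ⟨t₀, ht₀, hne⟩ := hw0
  -- with `w'(0) ≥ 0` its boundary term has the favourable sign
  have hnonneg : 0 ≤ deriv w 0 → p * (1 - γ) ≤ 1 → False := by
    intro hw1 hpγ
    refine hne (eq_zero_of_vanishing_boundary hpq hγ (hγq hpγ) hb hl0 hκp hK hwc hD0
      (fun T hT => (H T hT).trans ?_) t₀ ht₀)
    have : 0 ≤ B * deriv w 0 * T ^ (2 - γ - α) := by positivity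
    linarith
  rcases hcond with ⟨hαγ, hpγ⟩ | ⟨-, hw1, hpγ⟩ | ⟨-, hw1, hpγ⟩ | ⟨-, hw1, hpd⟩
  · have hB0 : Tendsto (fun T : ℝ => -(B * deriv w 0 * T ^ (2 - γ - α))) atTop (nhds 0) := by
      have := ((tendsto_rpow_neg_atTop (by linarith : 0 < γ + α - 2)).const_mul
        (B * deriv w 0)).neg
      rw [mul_zero, neg_zero] at this
      convert this using 5
      ring
    have hr := hB0.add hD0
    rw [add_zero] at hr
    exact hne (eq_zero_of_vanishing_boundary hpq hγ (hγq hpγ) hb hl0 hκp hK hwc hr H t₀ ht₀)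
  · exact hnonneg hw1.ge hpγ
  · exact hnonneg hw1.le hpγ
  · refine false_of_growing_boundary hpq ?_ hb hl0 hκp hK hB hw1 hwc H
    have hα0 : 0 < α - 1 := by linarith
    have h1 : (p - 1) * (α - 1) < γ := by
      rw [← lt_div_iff₀ hα0]; linarith
    have h2 : α - 1 < γ / (p - 1) := by
      rw [lt_div_iff₀ hp1]; linarith
    have h3 : γ * q = γ + γ / (p - 1) := by
      rw [hq]; field_simp; ring
    linarith
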